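/- Let d ≥ 5 and n ≥ 1. There is a number c = c(d,n) > 0 such that whenever A, B ⊂ Z^d are disjoint, A ∪ B has exactly n elements, A is connected in the nearest-neighbor graph of Z^d, and dist(A, B) ≥ 4^d·n, then for any distinct x, y ∈ A which are exposed in A ∪ B, H_{A∪B}(x) ≥ c·H_{A∪B}(y). -/

import Mathlib

open MeasureTheory

namespace HATFormal

/-- Points of the lattice `ℤ^d`. -/
abbrev Pt (d : ℕ) := Fin d → ℤ

/-- The `2d` unit steps of the simple random walk on `ℤ^d`. -/
def Dir (d : ℕ) : Set (Pt d) :=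
  {s | ∃ i : Fin d, s = Pi.single i 1 ∨ s = Pi.single i (-1)}

/-- The position, after `t` steps, of the walk started at `x` with steps `s`. -/
def wpos (d : ℕ) (x : Pt d) {T : ℕ} (s : Fin T → Pt d) (t : ℕ) : Pt d :=
  x + ∑ i ∈ Finset.univ.filter (fun i : Fin T => (i : ℕ) < t), s i

/-- The probability of an event `P` of the first `T` steps of simple random walk on `ℤ^d`. -/
noncomputable def prob (d T : ℕ) (P : (Fin T → Pt d) → Prop) : ℝ :=
  (Nat.card {s : Fin T → Pt d // (∀ i, s i ∈ Dir d) ∧ P s} : ℝ) / ((2 * d : ℕ) : ℝ) ^ T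

open Classical in
/-- `esc d A x = P_x(τ_A = ∞)` if `x ∈ A`, and `0` otherwise. -/
noncomputable def esc (d : ℕ) (A : Set (Pt d)) (x : Pt d) : ℝ :=
  if x ∈ A then ⨅ T : ℕ, prob d T (fun s => ∀ t, 1 ≤ t → t ≤ T → wpos d x s t ∉ A) else 0

/-- The capacity of `A`. -/
noncomputable def capa (d : ℕ) (A : Set (Pt d)) : ℝ := ∑' x : A, esc d A (x : Pt d)

/-- The harmonic measure `H_A(x) = esc_A(x) / cap_A`. -/
noncomputable def harm (d : ℕ) (A : Set (Pt d)) (x : Pt d) : ℝ := esc d A x / capa d A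

/-- `P_x(τ_W < ∞)`. -/
noncomputable def retProb (d : ℕ) (W : Set (Pt d)) (x : Pt d) : ℝ :=
  ∑' t : ℕ, prob d t (fun s => 1 ≤ t ∧ wpos d x s t ∈ W ∧
    ∀ u, 1 ≤ u → u < t → wpos d x s u ∉ W)

/-- `P_x(τ_W < ∞ and S_{τ_W − 1} = y)`. -/
noncomputable def hitFrom (d : ℕ) (W : Set (Pt d)) (x y : Pt d) : ℝ :=
  ∑' t : ℕ, prob d t (fun s => 1 ≤ t ∧ wpos d x s t ∈ W ∧ wpos d x s (t - 1) = y ∧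
    ∀ u, 1 ≤ u → u < t → wpos d x s u ∉ W)

/-- `P_x(τ_W < ∞ and S_{τ_W} ∈ T)`. -/
noncomputable def firstHitIn (d : ℕ) (W T : Set (Pt d)) (x : Pt d) : ℝ :=
  ∑' t : ℕ, prob d t (fun s => 1 ≤ t ∧ wpos d x s t ∈ W ∧ wpos d x s t ∈ T ∧
    ∀ u, 1 ≤ u → u < t → wpos d x s u ∉ W)

/-- `P_x(S_{τ_W − 1} = y ∣ τ_W < ∞)`. -/
noncomputable def transP (d : ℕ) (W : Set (Pt d)) (x y : Pt d) : ℝ :=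
  hitFrom d W x y / retProb d W x

/-- The Green's function of simple random walk on `ℤ^d`. -/
noncomputable def green (d : ℕ) (x : Pt d) : ℝ :=
  ∑' t : ℕ, prob d t (fun s => wpos d x s t = 0)

/-- Configurations: finite subsets of `ℤ^d`. -/
abbrev Conf (d : ℕ) := Finset (Pt d)

/-- `p_U(x, y)`, the probability that HAT activates at `x` and transports to `y`. -/
noncomputable def pHAT (d : ℕ) (U : Conf d) (x y : Pt d) : ℝ :=
  harm d (↑U) x * transP d ((↑U : Set (Pt d)) \ {x}) x y

open Classical in
/-- The transition probabilities of HAT. -/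
noncomputable def hatProb (d : ℕ) (U V : Conf d) : ℝ :=
  if V = U then ∑' z : Pt d, pHAT d U z z
  else ∑' x : Pt d, ∑' y : Pt d,
    if x ∈ U ∧ x ≠ y ∧ V = insert y (U.erase x) then pHAT d U x y else 0

instance (d : ℕ) : MeasurableSpace (Conf d) := ⊤

/-- `μ` is the law of HAT started from `U`. -/
def IsHATLaw (d : ℕ) (U : Conf d) (μ : Measure (ℕ → Conf d)) : Prop :=
  IsProbabilityMeasure μ ∧
  ∀ (t : ℕ) (u : ℕ → Conf d),
    μ {ω | ∀ s ≤ t, ω s = u s} =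
      (if u 0 = U then 1 else 0) *
        ∏ s ∈ Finset.range t, ENNReal.ofReal (hatProb d (u s) (u (s + 1)))

/-- A signed permutation plus translation of `ℤ^d`. -/
def SymImage (d : ℕ) (σ : Equiv.Perm (Fin d)) (ε : Fin d → ℤ) (v : Pt d) (x : Pt d) : Pt d :=
  fun i => v i + ε i * x (σ i)

/-- `SymEq d U V` holds when `V = gU` for a symmetry `g` of `ℤ^d`. -/
def SymEq (d : ℕ) (U V : Conf d) : Prop :=
  ∃ (σ : Equiv.Perm (Fin d)) (ε : Fin d → ℤ) (v : Pt d),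
    (∀ i, ε i = 1 ∨ ε i = -1) ∧ V = U.image (SymImage d σ ε v)

/-- Euclidean distance on `ℤ^d`. -/
noncomputable def dist0 (d : ℕ) (x y : Pt d) : ℝ :=
  Real.sqrt (∑ i, ((x i : ℝ) - (y i : ℝ)) ^ 2)

/-- Euclidean distance between finite subsets of `ℤ^d`. -/
noncomputable def setDist (d : ℕ) (A B : Finset (Pt d)) : ℝ :=
  sInf {r : ℝ | ∃ x ∈ A, ∃ y ∈ B, r = dist0 d x y}

/-- Euclidean diameter of a finite subset of `ℤ^d`. -/
noncomputable def diam0 (d : ℕ) (A : Finset (Pt d)) : ℝ :=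
  sSup {r : ℝ | ∃ x ∈ A, ∃ y ∈ A, r = dist0 d x y}

/-- Lattice (nearest-neighbor) adjacency in `ℤ^d`. -/
def latAdj (d : ℕ) (x y : Pt d) : Prop := (∑ i, (x i - y i).natAbs) = 1

/-- Exterior lattice boundary of a set. -/
def bdry (d : ℕ) (A : Set (Pt d)) : Set (Pt d) := {z | z ∉ A ∧ ∃ w ∈ A, latAdj d z w}

/-- Non-isolated configurations: some exposed element has a lattice neighbor in the set. -/
def NonIso (d : ℕ) (U : Conf d) : Prop :=
  ∃ x ∈ U, 0 < esc d (↑U) x ∧ ∃ y ∈ U, latAdj d x y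

/-- `C` is a clustering (ordered partition into nonempty clusters) of `U`. -/
def IsClusteringOf (d : ℕ) {k : ℕ} (C : Fin k → Finset (Pt d)) (U : Finset (Pt d)) : Prop :=
  (∀ i, (C i).Nonempty) ∧ (∀ i j, i ≠ j → Disjoint (C i) (C j)) ∧
    Finset.univ.biUnion C = U

/-- `C^{≠ i}`, the union of the clusters other than `i`. -/
def others (d : ℕ) {k : ℕ} (C : Fin k → Finset (Pt d)) (i : Fin k) : Finset (Pt d) :=
  Finset.univ.biUnion fun j => if j = i then ∅ else C j

/-- The separation of a clustering. -/
noncomputable def sep (d : ℕ) {k : ℕ} (C : Fin k → Finset (Pt d)) : ℝ :=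
  ⨅ i, setDist d (C i) (others d C i)

/-- `(a, b)` separated dimer-or-trimer (DOT) clusterings. -/
def IsDOT (d : ℕ) {k : ℕ} (C : Fin k → Finset (Pt d)) (a b : ℝ) : Prop :=
  (∀ i, (C i).card = 2 ∨ (C i).card = 3) ∧ a ≤ sep d C ∧
    ∀ i, diam0 d (C i) ≤ b * Real.log (setDist d (C i) (others d C i))

/-- Clusterings with an unspecified number of clusters. -/
abbrev ClusteringS (d : ℕ) := Σ k : ℕ, Fin k → Finset (Pt d)

/-- `π(C)`, the union of the clusters of `C`. -/
def confOf (d : ℕ) (C : ClusteringS d) : Conf d := Finset.univ.biUnion C.2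

/-- `C ∈ 𝒞(U, a, b)`. -/
def InC (d : ℕ) (U : Conf d) (a b : ℝ) (C : ClusteringS d) : Prop :=
  IsClusteringOf d C.2 U ∧ IsDOT d C.2 a b

/-- `U ∈ 𝒰_{d,n}(a, b)`. -/
def InU (d n : ℕ) (a b : ℝ) (U : Conf d) : Prop :=
  U.card = n ∧ ∃ C : ClusteringS d, InC d U a b C

/-- `C` is a clustering of an `n`-element configuration. -/
def IsClusteringConf (d n : ℕ) (C : ClusteringS d) : Prop :=
  (∀ i, (C.2 i).Nonempty) ∧ (∀ i j, i ≠ j → Disjoint (C.2 i) (C.2 j)) ∧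
    (confOf d C).card = n

open Classical in
/-- One step of the natural clustering. -/
noncomputable def clustStep (d : ℕ) (Ut Ut1 : Conf d) (C : ClusteringS d) : ClusteringS d :=
  if Ut1 = Ut then C
  else if h : ∃ p : Pt d × Pt d × Fin C.1,
      Ut \ Ut1 = {p.1} ∧ Ut1 \ Ut = {p.2.1} ∧ p.1 ∈ C.2 p.2.2 then
    ⟨C.1, Function.update C.2 h.choose.2.2
      (insert h.choose.2.1 ((C.2 h.choose.2.2).erase h.choose.1))⟩
  else ⟨1, fun _ => Ut1⟩

/-- The natural clustering of the trajectory `ω` with initial clustering `C0`. -/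
noncomputable def natClust (d : ℕ) (ω : ℕ → Conf d) (C0 : ClusteringS d) : ℕ → ClusteringS d
  | 0 => C0
  | t + 1 => clustStep d (ω t) (ω (t + 1)) (natClust d ω C0 t)

/-- `a_s = s^{1/2 − n^{−100}} + 100 n`. -/
noncomputable def aSep (n s : ℕ) : ℝ :=
  (s : ℝ) ^ ((1 : ℝ) / 2 - (n : ℝ) ^ (-(100 : ℝ))) + 100 * n

/-- `C^{i, x, y}`: remove `x` from cluster `i` of `C` and add `y` to that cluster. -/
def updC (d : ℕ) (C : ClusteringS d) (i : Fin C.1) (x y : Pt d) : ClusteringS d :=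
  ⟨C.1, Function.update C.2 i (insert y ((C.2 i).erase x))⟩

open Classical in
/-- The transition probabilities of the lifting of HAT to clusterings. -/
noncomputable def liftProb (d : ℕ) (E0 E1 : ClusteringS d) : ℝ :=
  ∑' x : Pt d, ∑' y : Pt d,
    if ∃ i : Fin E0.1, x ∈ E0.2 i ∧ E1 = updC d E0 i x y
    then pHAT d (confOf d E0) x y else 0

/-- The capacity of a clustering: the sum of the capacities of its clusters. -/
noncomputable def capS (d : ℕ) (C : ClusteringS d) : ℝ := ∑ i, capa d (↑(C.2 i))

/-- `H_C(i, x) = esc_{C^i}(x) / cap_C`. -/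
noncomputable def harmS (d : ℕ) (C : ClusteringS d) (i : Fin C.1) (x : Pt d) : ℝ :=
  esc d (↑(C.2 i)) x / capS d C

/-- `q_C(i, x, y)`. -/
noncomputable def qIHAT (d : ℕ) (C : ClusteringS d) (i : Fin C.1) (x y : Pt d) : ℝ :=
  harmS d C i x * transP d ((↑(C.2 i) : Set (Pt d)) \ {x}) x y

open Classical in
/-- The transition probabilities of intracluster HAT (IHAT). -/
noncomputable def ihatProb (d : ℕ) (D E : ClusteringS d) : ℝ :=
  ∑' x : Pt d, ∑' y : Pt d, ∑ i : Fin D.1,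
    if x ∈ D.2 i ∧ E = updC d D i x y then qIHAT d D i x y else 0

instance (d : ℕ) : MeasurableSpace (ClusteringS d) := ⊤

open Classical in
/-- `μ` is the law of the lifted HAT chain started from `E0`. -/
def IsLiftLaw (d : ℕ) (E0 : ClusteringS d) (μ : Measure (ℕ → ClusteringS d)) : Prop :=
  IsProbabilityMeasure μ ∧
  ∀ (t : ℕ) (u : ℕ → ClusteringS d),
    μ {ω | ∀ s ≤ t, ω s = u s} =
      (if u 0 = E0 then 1 else 0) *
        ∏ s ∈ Finset.range t, ENNReal.ofReal (liftProb d (u s) (u (s + 1)))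

open Classical in
/-- `μ` is the law of intracluster HAT started from `D0`. -/
def IsIHATLaw (d : ℕ) (D0 : ClusteringS d) (μ : Measure (ℕ → ClusteringS d)) : Prop :=
  IsProbabilityMeasure μ ∧
  ∀ (t : ℕ) (u : ℕ → ClusteringS d),
    μ {ω | ∀ s ≤ t, ω s = u s} =
      (if u 0 = D0 then 1 else 0) *
        ∏ s ∈ Finset.range t, ENNReal.ofReal (ihatProb d (u s) (u (s + 1)))

/-- `Pairs(E0, E1)`. -/
def Pairs (d : ℕ) (E0 E1 : ClusteringS d) : Set (Pt d × Pt d) :=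
  {p | 0 < pHAT d (confOf d E0) p.1 p.2 ∧
    ∃ i : Fin E0.1, p.1 ∈ E0.2 i ∧ E1 = updC d E0 i p.1 p.2}

/-- `Triples(E0, E1)`. -/
def Triples (d : ℕ) (E0 E1 : ClusteringS d) : Set (Fin E0.1 × Pt d × Pt d) :=
  {q | 0 < qIHAT d E0 q.1 q.2.1 q.2.2 ∧ E1 = updC d E0 q.1 q.2.1 q.2.2}

/-- The first standard basis vector of `ℤ^d`. -/
def e1v (d : ℕ) : Pt d := fun i => if (i : ℕ) = 0 then 1 else 0

/-- Reference dimers and trimers. -/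
def Ref (d : ℕ) : Set (Finset (Pt d)) :=
  {A | ∃ x : Pt d, A = {x, x + e1v d} ∨ A = {x, x + e1v d, x + e1v d + e1v d}}

/-- *-adjacency in `ℤ^d`: distinct points differing by at most one in each coordinate. -/
def starAdj (d : ℕ) (x y : Pt d) : Prop := x ≠ y ∧ ∀ i, (x i - y i).natAbs ≤ 1

/-- The *-visible boundary of `A`. -/
def visBdry (d : ℕ) (A : Finset (Pt d)) : Set (Pt d) :=
  {x | (∃ y ∈ A, starAdj d x y) ∧
    ∃ γ : ℕ → Pt d, γ 0 = x ∧ (∀ t, latAdj d (γ t) (γ (t + 1))) ∧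
      (∀ t, γ t ∉ A) ∧ ∀ r : ℝ, ∃ t, r < dist0 d (γ t) 0}

/-- `A` is connected in the nearest-neighbor graph of `ℤ^d`. -/
def LatConnected (d : ℕ) (A : Finset (Pt d)) : Prop :=
  ∀ x ∈ A, ∀ y ∈ A, ∃ (L : ℕ) (γ : ℕ → Pt d), γ 0 = x ∧ γ L = y ∧
    (∀ t < L, latAdj d (γ t) (γ (t + 1))) ∧ ∀ t ≤ L, γ t ∈ A

/-- Strict lexicographic order on `ℤ^d`. -/
def lexLt (d : ℕ) (x y : Pt d) : Prop :=
  ∃ i : Fin d, (∀ j, j < i → x j = y j) ∧ x i < y i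

/-- `x` is the lex (least) element of `A`. -/
def IsLex (d : ℕ) (A : Finset (Pt d)) (x : Pt d) : Prop :=
  x ∈ A ∧ ∀ y ∈ A, y ≠ x → lexLt d x y

/-! Since `esc ≤ 1`, it is enough to bound `esc_U(x)` below by a constant depending only on `d`
and `n`, for every exposed point `x` of an `n`-point set `U`.

The function `g(z) = (1 + |z|² / 64)^(-1/4)` is superharmonic in dimension `d ≥ 3`, so that the
walk from `v` ever hits `U` with probability at most `∑ u ∈ U, g (v - u)`. Hence it escapes with
probability at least `1/2` as soon as `v` is at distance `32 n²` from `U`.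

An exposed `x` can reach such a `v` while avoiding `U`: otherwise the set reachable from `x` off `U`
is finite, and since `|S_t|² - t` is a martingale the walk leaves a finite set, hence hits `U`,
almost surely. The reachable points near `U` are boundedly many, so boundedly many steps, each of
probability `1/(2d)`, lead from `x` to `v`. -/

open Finset Function
open scoped BigOperators Pointwise

variable {d : ℕ}

/-- The `2d` unit steps `±eᵢ`, enumerated by the coordinate and the sign (`true` for `+`), so that
one step of simple random walk is an average over `Fin d × Bool`. -/
def stepVec (a : Fin d × Bool) : Pt d := Pi.single a.1 (if a.2 then 1 else -1)

lemma range_stepVec : Set.range (stepVec : Fin d × Bool → Pt d) = Dir d := by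
  ext s
  simp [stepVec, Dir, eq_comm (b := s), or_comm]

lemma stepVec_injective : Injective (stepVec : Fin d × Bool → Pt d) := by
  rintro ⟨i, b⟩ ⟨j, c⟩ h
  have h_at := congrFun h i
  by_cases hij : i = j
  · subst hij
    cases b <;> cases c <;> simp [stepVec] at h_at ⊢
  · cases b <;> simp [stepVec, hij] at h_at

open Classical in
lemma prob_eq_expect (T : ℕ) (P : (Fin T → Pt d) → Prop) :
    prob d T P = 𝔼 w : Fin T → Fin d × Bool, if P (stepVec ∘ w) then (1 : ℝ) else 0 := by
  have card_eq : Nat.card {s : Fin T → Pt d // (∀ i, s i ∈ Dir d) ∧ P s} =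
      Nat.card {w : Fin T → Fin d × Bool // P (stepVec ∘ w)} := by
    refine (Nat.card_eq_of_bijective
      (fun w => ⟨stepVec ∘ w.1, fun i => range_stepVec ▸ Set.mem_range_self _, w.2⟩) ⟨?_, ?_⟩).symm
    · intro w w' h
      exact Subtype.ext (stepVec_injective.comp_left (congrArg Subtype.val h))
    · rintro ⟨s, hs, hP⟩
      simp only [← range_stepVec, Set.mem_range] at hs
      choose w hw using hs
      obtain rfl : stepVec ∘ w = s := funext hw
      exact ⟨⟨w, hP⟩, rfl⟩
  rw [prob, card_eq, Fintype.expect_eq_sum_div_card, Finset.sum_boole, Nat.card_eq_fintype_card,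
    Fintype.card_subtype]
  simp [mul_comm]

lemma prob_nonneg (T : ℕ) (P : (Fin T → Pt d) → Prop) : 0 ≤ prob d T P := by
  unfold prob
  positivity

lemma prob_le_one (T : ℕ) (P : (Fin T → Pt d) → Prop) : prob d T P ≤ 1 := by
  classical
  rw [prob_eq_expect]
  rcases isEmpty_or_nonempty (Fin T → Fin d × Bool)
  · simp
  · exact expect_le univ_nonempty fun w _ => by split_ifs <;> norm_num

lemma prob_succ (T : ℕ) (P : (Fin (T + 1) → Pt d) → Prop) :
    prob d (T + 1) P = 𝔼 a : Fin d × Bool, prob d T fun s => P (Fin.cons (stepVec a) s) := by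
  classical
  simp only [prob_eq_expect]
  rw [← Fintype.expect_equiv (Fin.consEquiv fun _ => Fin d × Bool) _ _ fun _ => rfl,
    ← univ_product_univ, expect_product]
  refine expect_congr rfl fun a _ => expect_congr rfl fun w _ => ?_
  have comp_cons : stepVec ∘ Fin.consEquiv (fun _ => Fin d × Bool) (a, w) =
      (Fin.cons (stepVec a) (stepVec ∘ w) : Fin (T + 1) → Pt d) := Fin.comp_cons ..
  rw [comp_cons]

lemma wpos_zero (x : Pt d) {T : ℕ} (s : Fin T → Pt d) : wpos d x s 0 = x := by
  simp [wpos]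

lemma wpos_cons_succ (x e : Pt d) {T : ℕ} (s : Fin T → Pt d) (t : ℕ) :
    wpos d x (Fin.cons e s : Fin (T + 1) → Pt d) (t + 1) = wpos d (x + e) s t := by
  unfold wpos
  rw [sum_filter, sum_filter, Fin.sum_univ_succ]
  simp [add_assoc]

/-- `P_x(τ_U > T)`, the probability that the walk from `x` avoids `U` at the times `1, …, T`. -/
noncomputable def avoidProb (U : Set (Pt d)) (T : ℕ) (x : Pt d) : ℝ :=
  prob d T fun s => ∀ t, 1 ≤ t → t ≤ T → wpos d x s t ∉ U

lemma avoidProb_nonneg (U : Set (Pt d)) (T : ℕ) (x : Pt d) : 0 ≤ avoidProb U T x :=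
  prob_nonneg _ _

lemma avoidProb_zero (U : Set (Pt d)) (x : Pt d) : avoidProb U 0 x = 1 := by
  classical
  rw [avoidProb, prob_eq_expect]
  have no_time (s : Fin 0 → Pt d) : ∀ t, 1 ≤ t → t ≤ 0 → wpos d x s t ∉ U := by lia
  exact (expect_congr rfl fun _ _ => if_pos (no_time _)).trans (Fintype.expect_const 1)

lemma avoids_cons_iff (U : Set (Pt d)) (x e : Pt d) {T : ℕ} (s : Fin T → Pt d) :
    (∀ t, 1 ≤ t → t ≤ T + 1 → wpos d x (Fin.cons e s : Fin (T + 1) → Pt d) t ∉ U) ↔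
      x + e ∉ U ∧ ∀ t, 1 ≤ t → t ≤ T → wpos d (x + e) s t ∉ U := by
  constructor
  · intro h
    refine ⟨?_, fun t _ ht => ?_⟩
    · simpa only [zero_add, wpos_cons_succ, wpos_zero] using h (0 + 1) le_rfl (by lia)
    · simpa only [wpos_cons_succ] using h (t + 1) (by lia) (by lia)
  · rintro ⟨h_first, h⟩ (_ | _ | t) ht hT
    · lia
    · simpa only [wpos_cons_succ, wpos_zero] using h_first
    · simpa only [wpos_cons_succ] using h (t + 1) (by lia) (by lia)

lemma avoidProb_succ (U : Set (Pt d)) (T : ℕ) (x : Pt d) :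
    avoidProb U (T + 1) x =
      𝔼 a : Fin d × Bool, Uᶜ.indicator (avoidProb U T) (x + stepVec a) := by
  rw [avoidProb, prob_succ]
  refine expect_congr rfl fun a _ => ?_
  simp only [avoids_cons_iff]
  by_cases ha : x + stepVec a ∈ U
  · simp [ha, prob]
  · simp [ha, avoidProb]

lemma avoidProb_le_one (U : Set (Pt d)) (T : ℕ) (x : Pt d) : avoidProb U T x ≤ 1 :=
  prob_le_one _ _

/-- `P_x(τ_U = ∞)`. Unlike `esc`, it is not set to `0` off `U`. -/
noncomputable def avoidForever (U : Set (Pt d)) (x : Pt d) : ℝ := ⨅ T, avoidProb U T x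

lemma avoidForever_nonneg (U : Set (Pt d)) (x : Pt d) : 0 ≤ avoidForever U x :=
  Real.iInf_nonneg fun T => avoidProb_nonneg U T x

lemma avoidForever_le_avoidProb (U : Set (Pt d)) (T : ℕ) (x : Pt d) :
    avoidForever U x ≤ avoidProb U T x :=
  ciInf_le ⟨0, Set.forall_mem_range.2 fun T => avoidProb_nonneg U T x⟩ T

lemma avoidForever_le_one (U : Set (Pt d)) (x : Pt d) : avoidForever U x ≤ 1 :=
  (avoidForever_le_avoidProb U 0 x).trans_eq (avoidProb_zero U x)

lemma esc_of_mem {U : Set (Pt d)} {x : Pt d} (hx : x ∈ U) : esc d U x = avoidForever U x :=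
  if_pos hx

lemma esc_of_notMem {U : Set (Pt d)} {x : Pt d} (hx : x ∉ U) : esc d U x = 0 :=
  if_neg hx

lemma esc_nonneg (U : Set (Pt d)) (x : Pt d) : 0 ≤ esc d U x := by
  by_cases hx : x ∈ U
  · exact esc_of_mem hx ▸ avoidForever_nonneg U x
  · exact (esc_of_notMem hx).ge

lemma esc_le_one (U : Set (Pt d)) (x : Pt d) : esc d U x ≤ 1 := by
  by_cases hx : x ∈ U
  · exact esc_of_mem hx ▸ avoidForever_le_one U x
  · exact (esc_of_notMem hx).trans_le zero_le_one

lemma avoidForever_add_stepVec_div_le (U : Set (Pt d)) (x : Pt d) {a : Fin d × Bool}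
    (ha : x + stepVec a ∉ U) : avoidForever U (x + stepVec a) / (2 * d) ≤ avoidForever U x := by
  refine le_ciInf fun T => ?_
  have hd : (1 : ℝ) ≤ d := mod_cast a.1.pos
  cases T with
  | zero =>
    rw [avoidProb_zero]
    exact div_le_one_of_le₀ (by linarith [avoidForever_le_one U (x + stepVec a)]) (by positivity)
  | succ T =>
    calc avoidForever U (x + stepVec a) / (2 * d)
        ≤ avoidProb U T (x + stepVec a) / (2 * d) := by
          gcongr
          exact avoidForever_le_avoidProb U T _
      _ = Uᶜ.indicator (avoidProb U T) (x + stepVec a) / (2 * d) := by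
          rw [Set.indicator_of_mem ha]
      _ ≤ (∑ b : Fin d × Bool, Uᶜ.indicator (avoidProb U T) (x + stepVec b)) / (2 * d) := by
          gcongr
          exact single_le_sum (f := fun b => Uᶜ.indicator (avoidProb U T) (x + stepVec b))
            (fun b _ => Set.indicator_nonneg (fun y _ => avoidProb_nonneg U T y) _) (mem_univ a)
      _ = avoidProb U (T + 1) x := by
          rw [avoidProb_succ, Fintype.expect_eq_sum_div_card]
          simp [mul_comm]

/-- A superharmonic function on `ℤ^d`: its average over the neighbors of a point is at most its
value at that point. -/
def IsSuperharmonic (g : Pt d → ℝ) : Prop :=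
  ∀ z, 𝔼 a : Fin d × Bool, g (z + stepVec a) ≤ g z

lemma IsSuperharmonic.sum_translates {g : Pt d → ℝ} (hg : IsSuperharmonic g)
    (U : Finset (Pt d)) : IsSuperharmonic fun z => ∑ u ∈ U, g (z - u) := by
  intro z
  rw [expect_sum_comm]
  refine sum_le_sum fun u _ => ?_
  simpa only [sub_add_eq_add_sub] using hg (z - u)

lemma IsSuperharmonic.one_sub_le_avoidProb [NeZero d] {g : Pt d → ℝ} (hg : IsSuperharmonic g)
    (g_nonneg : 0 ≤ g) {U : Set (Pt d)} (one_le : ∀ u ∈ U, 1 ≤ g u) (T : ℕ) (z : Pt d) :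
    1 - g z ≤ avoidProb U T z := by
  induction T generalizing z with
  | zero => exact (sub_le_self 1 (g_nonneg z)).trans_eq (avoidProb_zero U z).symm
  | succ T ih =>
    have step (y : Pt d) : 1 - g y ≤ Uᶜ.indicator (avoidProb U T) y := by
      by_cases hy : y ∈ U
      · simpa [hy] using one_le y hy
      · simpa [hy] using ih y
    calc 1 - g z ≤ 1 - 𝔼 a : Fin d × Bool, g (z + stepVec a) := sub_le_sub_left (hg z) 1
      _ = 𝔼 a : Fin d × Bool, (1 - g (z + stepVec a)) := by
        rw [expect_sub_distrib, Fintype.expect_const]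
      _ ≤ avoidProb U (T + 1) z := by
        rw [avoidProb_succ]
        exact expect_le_expect fun a _ => step _

lemma IsSuperharmonic.one_sub_sum_le_avoidForever [NeZero d] {g : Pt d → ℝ}
    (hg : IsSuperharmonic g) (g_nonneg : 0 ≤ g) (one_le : 1 ≤ g 0) (U : Finset (Pt d))
    (z : Pt d) : 1 - ∑ u ∈ U, g (z - u) ≤ avoidForever (U : Set (Pt d)) z := by
  refine le_ciInf fun T => (hg.sum_translates U).one_sub_le_avoidProb
    (fun y => sum_nonneg fun u _ => g_nonneg _) (fun u hu => ?_) T z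
  calc 1 ≤ g (u - u) := by rwa [sub_self]
    _ ≤ ∑ v ∈ U, g (u - v) := single_le_sum (f := fun v => g (u - v)) (fun v _ => g_nonneg _) hu

/-- The squared Euclidean norm on `ℤ^d`. -/
def normSq (z : Pt d) : ℝ := ∑ i, (z i : ℝ) ^ 2

lemma normSq_nonneg (z : Pt d) : 0 ≤ normSq z :=
  sum_nonneg fun _ _ => sq_nonneg _

lemma sq_apply_le_normSq (z : Pt d) (i : Fin d) : (z i : ℝ) ^ 2 ≤ normSq z :=
  single_le_sum (f := fun i => (z i : ℝ) ^ 2) (fun _ _ => sq_nonneg _) (mem_univ i)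

/-- The inner product of `z` with the step `a`, that is `± zᵢ`. -/
def stepInner (z : Pt d) (a : Fin d × Bool) : ℝ := if a.2 then z a.1 else -z a.1

lemma stepInner_sq (z : Pt d) (a : Fin d × Bool) : stepInner z a ^ 2 = (z a.1 : ℝ) ^ 2 := by
  unfold stepInner
  split_ifs <;> ring

lemma normSq_add_stepVec (z : Pt d) (a : Fin d × Bool) :
    normSq (z + stepVec a) = normSq z + 2 * stepInner z a + 1 := by
  have coord (i : Fin d) : ((z + stepVec a) i : ℝ) ^ 2 =
      (z i : ℝ) ^ 2 + (Pi.single a.1 (2 * stepInner z a + 1) : Fin d → ℝ) i := by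
    rcases eq_or_ne i a.1 with rfl | hi
    · simp only [stepVec, stepInner, Pi.add_apply, Pi.single_eq_same]
      split_ifs <;> push_cast <;> ring
    · simp [stepVec, hi]
  rw [normSq, sum_congr rfl fun i _ => coord i, sum_add_distrib, sum_pi_single',
    if_pos (mem_univ _), normSq, add_assoc]

lemma expect_quadratic_stepInner [NeZero d] (α β γ : ℝ) (z : Pt d) :
    𝔼 a, (α + β * stepInner z a + γ * stepInner z a ^ 2) = α + γ * normSq z / d := by
  have mean_zero : ∑ a, stepInner z a = 0 := by
    simp [Fintype.sum_prod_type, stepInner]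
  have mean_sq : ∑ a, stepInner z a ^ 2 = 2 * normSq z := by
    simp [Fintype.sum_prod_type, stepInner_sq, normSq, mul_sum]
  have hd : (d : ℝ) ≠ 0 := NeZero.ne _
  rw [Fintype.expect_eq_sum_div_card, sum_add_distrib, sum_add_distrib, ← mul_sum, ← mul_sum,
    mean_zero, mean_sq]
  simp only [sum_const, card_univ, Fintype.card_prod, Fintype.card_fin, Fintype.card_bool,
    nsmul_eq_mul, Nat.cast_mul, Nat.cast_ofNat, mul_zero, add_zero]
  field_simp

/- The second Taylor coefficient is `5/32`. Its replacement `3/16` absorbs the higher order terms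
and is the largest one with which the computation for `potential` below still covers `d = 3`. -/
lemma one_add_rpow_neg_inv_four_le {t : ℝ} (ht : |t| ≤ 1 / 8) :
    (1 + t) ^ (-4 : ℝ)⁻¹ ≤ 1 - t / 4 + 3 / 16 * t ^ 2 := by
  obtain ⟨ht_lower, ht_upper⟩ := abs_le.1 ht
  have rhs_pos : 0 < 1 - t / 4 + 3 / 16 * t ^ 2 := by nlinarith [sq_nonneg t]
  rw [Real.rpow_inv_le_iff_of_neg (by linarith) rhs_pos (by norm_num), Real.rpow_neg rhs_pos.le,
    inv_le_iff_one_le_mul₀ (by positivity)]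
  norm_cast
  nlinarith [mul_nonneg (sq_nonneg t) (neg_le_iff_add_nonneg.1 ht_lower), sq_nonneg (t ^ 3),
    sq_nonneg (t ^ 4)]

lemma one_add_div_four_le_one_sub_rpow {w : ℝ} (hw : 0 ≤ w) (hw' : w < 1) :
    1 + w / 4 ≤ (1 - w) ^ (-4 : ℝ)⁻¹ := by
  have lhs_pos : 0 < 1 + w / 4 := by positivity
  rw [Real.le_rpow_inv_iff_of_neg lhs_pos (by linarith) (by norm_num), Real.rpow_neg lhs_pos.le,
    inv_eq_one_div, le_div_iff₀ (by positivity)]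
  norm_cast
  nlinarith [pow_nonneg hw 2, pow_nonneg hw 3, pow_nonneg hw 4, pow_nonneg hw 5]

/-- The potential `(1 + |z|² / 64)^(-1/4)`, which plays the role of the Green's function. Since it
decays like `|z|^(-1/2)`, more slowly than `|z|^(2 - d)`, it is superharmonic for `d ≥ 3`. The
scale `64` is large enough for the second order Taylor expansion to be valid at every step. -/
noncomputable def potential (z : Pt d) : ℝ := (1 + normSq z / 64) ^ (-4 : ℝ)⁻¹

lemma potential_nonneg : 0 ≤ potential (d := d) := fun z =>
  Real.rpow_nonneg (by linarith [normSq_nonneg z]) _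

lemma potential_zero : potential (0 : Pt d) = 1 := by
  simp [potential, normSq]

lemma abs_two_mul_stepInner_div_le (z : Pt d) (a : Fin d × Bool) :
    |2 * stepInner z a / (normSq z + 65)| ≤ 1 / 8 := by
  have h_pos : 0 < normSq z + 65 := by linarith [normSq_nonneg z]
  have h_sq : stepInner z a ^ 2 ≤ normSq z := stepInner_sq z a ▸ sq_apply_le_normSq z a.1
  refine abs_le_of_sq_le_sq ?_ (by norm_num)
  rw [div_pow, div_le_iff₀ (by positivity)]
  nlinarith [sq_nonneg (normSq z - 65)]

lemma potential_add_stepVec_le (z : Pt d) (a : Fin d × Bool) :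
    potential (z + stepVec a) ≤ ((normSq z + 65) / 64) ^ (-4 : ℝ)⁻¹ *
      (1 - 2 * stepInner z a / (normSq z + 65) / 4 +
        3 / 16 * (2 * stepInner z a / (normSq z + 65)) ^ 2) := by
  have h_pos : 0 < normSq z + 65 := by linarith [normSq_nonneg z]
  have h_abs := abs_two_mul_stepInner_div_le z a
  have factor : 1 + normSq (z + stepVec a) / 64 =
      (normSq z + 65) / 64 * (1 + 2 * stepInner z a / (normSq z + 65)) := by
    rw [normSq_add_stepVec]
    field_simp
    ring
  rw [potential, factor, Real.mul_rpow (by positivity) (by linarith [(abs_le.1 h_abs).1])]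
  gcongr
  exact one_add_rpow_neg_inv_four_le h_abs

lemma rpow_mul_one_add_le_potential (z : Pt d) :
    ((normSq z + 65) / 64) ^ (-4 : ℝ)⁻¹ * (1 + 1 / (normSq z + 65) / 4) ≤ potential z := by
  have h_pos : 0 < normSq z + 65 := by linarith [normSq_nonneg z]
  have h_lt : 1 / (normSq z + 65) < 1 := (div_lt_one h_pos).2 (by linarith [normSq_nonneg z])
  calc ((normSq z + 65) / 64) ^ (-4 : ℝ)⁻¹ * (1 + 1 / (normSq z + 65) / 4)
      ≤ ((normSq z + 65) / 64) ^ (-4 : ℝ)⁻¹ * (1 - 1 / (normSq z + 65)) ^ (-4 : ℝ)⁻¹ := by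
        gcongr
        exact one_add_div_four_le_one_sub_rpow (by positivity) h_lt
    _ = potential z := by
        rw [← Real.mul_rpow (by positivity) (sub_nonneg.2 h_lt.le), potential]
        congr 1
        field_simp
        ring

lemma isSuperharmonic_potential (hd : 3 ≤ d) : IsSuperharmonic (potential (d := d)) := by
  intro z
  have : NeZero d := ⟨by lia⟩
  have hd' : (3 : ℝ) ≤ d := mod_cast hd
  obtain ⟨M, hM⟩ : ∃ M, normSq z + 65 = M := ⟨_, rfl⟩
  have normSq_le : normSq z ≤ M := by linarith
  have M_pos : 0 < M := by linarith [normSq_nonneg z]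
  calc 𝔼 a, potential (z + stepVec a)
      ≤ 𝔼 a, (M / 64) ^ (-4 : ℝ)⁻¹ * (1 - 2 * stepInner z a / M / 4 +
          3 / 16 * (2 * stepInner z a / M) ^ 2) :=
        expect_le_expect fun a _ => hM ▸ potential_add_stepVec_le z a
    _ = (M / 64) ^ (-4 : ℝ)⁻¹ *
          𝔼 a, (1 + -1 / (2 * M) * stepInner z a + 3 / (4 * M ^ 2) * stepInner z a ^ 2) := by
        rw [mul_expect]
        refine expect_congr rfl fun a _ => congrArg _ ?_
        ring
    _ = (M / 64) ^ (-4 : ℝ)⁻¹ * (1 + 3 / (4 * M ^ 2) * normSq z / d) := by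
        rw [expect_quadratic_stepInner]
    _ ≤ (M / 64) ^ (-4 : ℝ)⁻¹ * (1 + 3 / (4 * M ^ 2) * M / 3) := by
        gcongr
    _ = (M / 64) ^ (-4 : ℝ)⁻¹ * (1 + 1 / M / 4) := by
        field_simp
    _ ≤ potential z := hM ▸ rpow_mul_one_add_le_potential z

lemma potential_le_one_div {z : Pt d} {n : ℕ} (hn : 0 < n)
    (hz : (32 * n ^ 2 : ℝ) ^ 2 ≤ normSq z) : potential z ≤ 1 / (2 * n) := by
  have base_pos : 0 < 1 + normSq z / 64 := by linarith [normSq_nonneg z]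
  rw [potential, Real.rpow_inv_le_iff_of_neg base_pos (by positivity) (by norm_num)]
  calc (1 / (2 * n : ℝ)) ^ (-4 : ℝ) = (32 * n ^ 2 : ℝ) ^ 2 / 64 := by
        rw [one_div, Real.inv_rpow (by positivity), ← Real.rpow_neg (by positivity), neg_neg,
          Real.rpow_ofNat]
        ring
    _ ≤ 1 + normSq z / 64 := by linarith

lemma mul_avoidProb_le [NeZero d] {U V : Set (Pt d)} {R : ℝ}
    (closed : ∀ v ∈ V, ∀ a, v + stepVec a ∉ U → v + stepVec a ∈ V)
    (bounded : ∀ v ∈ U ∪ V, normSq v ≤ R) (T : ℕ) {v : Pt d} (hv : v ∈ V) :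
    T * avoidProb U T v ≤ R - normSq v := by
  induction T generalizing v with
  | zero => simpa using bounded v (.inr hv)
  | succ T ih =>
    have step (a : Fin d × Bool) : (T + 1) * Uᶜ.indicator (avoidProb U T) (v + stepVec a) ≤
        R - normSq (v + stepVec a) + 1 := by
      by_cases ha : v + stepVec a ∈ U
      · rw [Set.indicator_of_notMem (Set.notMem_compl_iff.2 ha), mul_zero]
        linarith [bounded _ (.inl ha)]
      · simp only [Set.indicator_of_mem (Set.mem_compl ha), add_mul, one_mul]
        exact add_le_add (ih (closed v hv a ha)) (avoidProb_le_one U T _)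
    calc ((T + 1 : ℕ) : ℝ) * avoidProb U (T + 1) v
        = 𝔼 a, (T + 1) * Uᶜ.indicator (avoidProb U T) (v + stepVec a) := by
          rw [avoidProb_succ, mul_expect, Nat.cast_succ]
      _ ≤ 𝔼 a, (R - normSq (v + stepVec a) + 1) := expect_le_expect fun a _ => step a
      _ = 𝔼 a, (R - normSq v + -2 * stepInner v a + 0 * stepInner v a ^ 2) := by
          refine expect_congr rfl fun a _ => ?_
          rw [normSq_add_stepVec]
          ring
      _ = R - normSq v := by
          rw [expect_quadratic_stepInner, zero_mul, zero_div, add_zero]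

lemma avoidForever_eq_zero_of_closed [NeZero d] {U V : Finset (Pt d)}
    (closed : ∀ v ∈ V, ∀ a, v + stepVec a ∉ U → v + stepVec a ∈ V) {v : Pt d} (hv : v ∈ V) :
    avoidForever (U : Set (Pt d)) v = 0 := by
  obtain ⟨R, hR⟩ := ((U ∪ V).image normSq).bddAbove
  have bounded : ∀ w ∈ (U ∪ V : Set (Pt d)), normSq w ≤ R := fun w hw =>
    hR (mem_coe.2 (mem_image_of_mem _ (mem_union.2 hw)))
  have linear_bound (T : ℕ) : T * avoidForever (U : Set (Pt d)) v ≤ R :=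
    calc T * avoidForever (U : Set (Pt d)) v ≤ T * avoidProb (U : Set (Pt d)) T v := by
          gcongr
          exact avoidForever_le_avoidProb _ T v
      _ ≤ R - normSq v := mul_avoidProb_le (V := V) closed bounded T hv
      _ ≤ R := sub_le_self R (normSq_nonneg v)
  by_contra h_ne
  have h_pos := (avoidForever_nonneg (U : Set (Pt d)) v).lt_of_ne' h_ne
  obtain ⟨T, hT⟩ := exists_nat_gt (R / avoidForever (U : Set (Pt d)) v)
  exact ((div_lt_iff₀ h_pos).1 hT).not_ge (linear_bound T)

/-- The points of `V` and those outside `U` one step away from them, so that the `k`-th iterate on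
`{x}` consists of the points the walk from `x` can reach within `k` steps while avoiding `U`. -/
def freeStep (U V : Finset (Pt d)) : Finset (Pt d) :=
  V ∪ (V + univ.image stepVec) \ U

lemma mem_freeStep {U V : Finset (Pt d)} {w : Pt d} :
    w ∈ freeStep U V ↔ w ∈ V ∨ (∃ v ∈ V, ∃ a, v + stepVec a = w) ∧ w ∉ U := by
  simp only [freeStep, mem_union, mem_sdiff, mem_add, mem_image, mem_univ, true_and,
    exists_exists_eq_and]

lemma avoidForever_div_pow_le [NeZero d] {U : Finset (Pt d)} {x v : Pt d} {k : ℕ}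
    (hv : v ∈ (freeStep U)^[k] {x}) :
    avoidForever (U : Set (Pt d)) v / (2 * d) ^ k ≤ avoidForever (U : Set (Pt d)) x := by
  have hd : (1 : ℝ) ≤ d := mod_cast NeZero.one_le
  induction k generalizing v with
  | zero =>
    obtain rfl : v = x := mem_singleton.1 hv
    simp
  | succ k ih =>
    rw [iterate_succ_apply', mem_freeStep] at hv
    obtain hv | ⟨⟨w, hw, a, rfl⟩, ha⟩ := hv
    · refine le_trans ?_ (ih hv)
      gcongr
      · exact avoidForever_nonneg _ _
      · linarith
      · exact k.le_succ
    · calc avoidForever (U : Set (Pt d)) (w + stepVec a) / (2 * d) ^ (k + 1)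
          = avoidForever (U : Set (Pt d)) (w + stepVec a) / (2 * d) / (2 * d) ^ k := by
            rw [pow_succ', div_div]
        _ ≤ avoidForever (U : Set (Pt d)) w / (2 * d) ^ k := by
            gcongr
            exact avoidForever_add_stepVec_div_le _ w (mt mem_coe.1 ha)
        _ ≤ avoidForever (U : Set (Pt d)) x := ih hw

lemma exists_isFixedPt_iterate_of_card_le {α : Type*} {f : Finset α → Finset α}
    (hf : ∀ s, s ⊆ f s) {s : Finset α} {N : ℕ} (hN : #(f^[N + 1] s) ≤ N) :
    ∃ k, IsFixedPt f (f^[k] s) := by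
  by_contra! h_ne
  have card_ge (k : ℕ) : k ≤ #(f^[k] s) := by
    induction k with
    | zero => exact Nat.zero_le _
    | succ k ih =>
      have growth : f^[k] s ⊂ f^[k + 1] s := by
        rw [iterate_succ_apply']
        exact (hf _).ssubset_of_ne (Ne.symm (h_ne k))
      exact ih.trans_lt (card_lt_card growth)
  exact absurd (card_ge (N + 1)) (by lia)

lemma card_le_of_forall_exists_normSq_sub_lt {U V : Finset (Pt d)} {R : ℕ}
    (h : ∀ v ∈ V, ∃ u ∈ U, normSq (v - u) < (R : ℝ) ^ 2) : #V ≤ #U * (2 * R + 1) ^ d := by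
  let box : Finset (Pt d) := Fintype.piFinset fun _ => Icc (-R : ℤ) R
  have subset_add_box : V ⊆ U + box := by
    intro v hv
    obtain ⟨u, hu, hvu⟩ := h v hv
    refine mem_add.2 ⟨u, hu, v - u, Fintype.mem_piFinset.2 fun i => ?_, add_sub_cancel u v⟩
    have coord_sq_lt : (v - u) i ^ 2 < (R : ℤ) ^ 2 := by
      exact_mod_cast (sq_apply_le_normSq (v - u) i).trans_lt hvu
    exact mem_Icc.2 (abs_le.1 (abs_lt_of_sq_lt_sq coord_sq_lt (by positivity)).le)
  have card_box : #box = (2 * R + 1) ^ d := by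
    rw [Fintype.card_piFinset_const, Int.card_Icc]
    congr 1
    lia
  exact (card_le_card subset_add_box).trans (card_box ▸ card_add_le)

lemma exists_far_mem_iterate_freeStep [NeZero d] {U : Finset (Pt d)} {x : Pt d}
    (hx : 0 < avoidForever (U : Set (Pt d)) x) (R : ℕ) :
    ∃ v ∈ (freeStep U)^[#U * (2 * R + 1) ^ d + 1] {x},
      ∀ u ∈ U, (R : ℝ) ^ 2 ≤ normSq (v - u) := by
  by_contra! all_near
  obtain ⟨k, hk⟩ := exists_isFixedPt_iterate_of_card_le
    (fun V v hv => mem_freeStep.2 (.inl hv)) (card_le_of_forall_exists_normSq_sub_lt all_near)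
  have x_mem (j : ℕ) : x ∈ (freeStep U)^[j] {x} := by
    induction j with
    | zero => exact mem_singleton_self x
    | succ j ih => exact iterate_succ_apply' .. ▸ mem_freeStep.2 (.inl ih)
  refine hx.ne' (avoidForever_eq_zero_of_closed (fun v hv a ha => ?_) (x_mem k))
  rw [← hk.eq]
  exact mem_freeStep.2 (.inr ⟨⟨v, hv, a, rfl⟩, ha⟩)

lemma half_le_avoidForever_of_far (hd : 3 ≤ d) {U : Finset (Pt d)} {v : Pt d}
    (far : ∀ u ∈ U, (32 * #U ^ 2 : ℝ) ^ 2 ≤ normSq (v - u)) :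
    1 / 2 ≤ avoidForever (U : Set (Pt d)) v := by
  have : NeZero d := ⟨by lia⟩
  have sum_le : ∑ u ∈ U, potential (v - u) ≤ 1 / 2 := by
    rcases U.eq_empty_or_nonempty with rfl | hU
    · norm_num
    · have : (0 : ℝ) < #U := mod_cast hU.card_pos
      calc ∑ u ∈ U, potential (v - u) ≤ #U • (1 / (2 * #U : ℝ)) :=
            sum_le_card_nsmul _ _ _ fun u hu => potential_le_one_div hU.card_pos (far u hu)
        _ = 1 / 2 := by
            rw [nsmul_eq_mul]
            field_simp
  linarith [(isSuperharmonic_potential hd).one_sub_sum_le_avoidForever potential_nonneg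
    potential_zero.ge U v]

lemma exists_pos_le_esc (n : ℕ) (hd : 3 ≤ d) :
    ∃ c : ℝ, 0 < c ∧ ∀ U : Finset (Pt d), #U = n →
      ∀ x, 0 < esc d (U : Set (Pt d)) x → c ≤ esc d (U : Set (Pt d)) x := by
  have : NeZero d := ⟨by lia⟩
  refine ⟨1 / 2 / (2 * d) ^ (n * (2 * (32 * n ^ 2) + 1) ^ d + 1), by positivity, ?_⟩
  rintro U rfl x hx
  have hxU : x ∈ (U : Set (Pt d)) := by
    by_contra hxU
    exact hx.ne' (esc_of_notMem hxU)
  rw [esc_of_mem hxU] at hx ⊢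
  obtain ⟨v, hv, far⟩ := exists_far_mem_iterate_freeStep hx (32 * #U ^ 2)
  calc 1 / 2 / (2 * d : ℝ) ^ (#U * (2 * (32 * #U ^ 2) + 1) ^ d + 1)
      ≤ avoidForever (U : Set (Pt d)) v / (2 * d) ^ (#U * (2 * (32 * #U ^ 2) + 1) ^ d + 1) := by
        gcongr
        exact half_le_avoidForever_of_far hd (mod_cast far)
    _ ≤ avoidForever (U : Set (Pt d)) x := avoidForever_div_pow_le hv

lemma capa_nonneg (U : Set (Pt d)) : 0 ≤ capa d U :=
  tsum_nonneg fun x => esc_nonneg U x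

theorem hm_comparison_general (d n : ℕ) (hd : 3 ≤ d) :
    ∃ c : ℝ, 0 < c ∧ ∀ U : Finset (Pt d), #U = n → ∀ x y,
      0 < esc d (U : Set (Pt d)) x →
        c * harm d (U : Set (Pt d)) y ≤ harm d (U : Set (Pt d)) x := by
  obtain ⟨c, c_pos, hc⟩ := exists_pos_le_esc (d := d) n hd
  refine ⟨c, c_pos, fun U hU x y hx => ?_⟩
  calc c * harm d (U : Set (Pt d)) y = c * esc d U y / capa d U := (mul_div_assoc ..).symm
    _ ≤ esc d U x / capa d U := by
        refine div_le_div_of_nonneg_right ?_ (capa_nonneg _)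
        exact (mul_le_of_le_one_right c_pos.le (esc_le_one _ y)).trans (hc U hU x hx)

/-- **Comparison of harmonic measure at two points.** Let `d ≥ 5`. There is
`c = c(d,n) > 0` such that if `A ∪ B` is an `n`-element subset of `ℤ^d` with `A` connected
and `dist(A,B) ≥ 4^d n`, then for any distinct `x, y ∈ A` which are exposed in `A ∪ B`,
`H_{A∪B}(x) ≥ c H_{A∪B}(y)`. -/
theorem hm_comparison (d n : ℕ) (hd : 5 ≤ d) (hn : 1 ≤ n) :
    ∃ c : ℝ, 0 < c ∧
      ∀ A B : Finset (Pt d), Disjoint A B → (A ∪ B).card = n → LatConnected d A →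
        (4 : ℝ) ^ d * (n : ℝ) ≤ setDist d A B →
        ∀ x ∈ A, ∀ y ∈ A, x ≠ y →
          0 < esc d (↑(A ∪ B)) x → 0 < esc d (↑(A ∪ B)) y →
            c * harm d (↑(A ∪ B)) y ≤ harm d (↑(A ∪ B)) x := by
  obtain ⟨c, c_pos, hc⟩ := hm_comparison_general d n (by lia)
  exact ⟨c, c_pos, fun A B _ hcard _ _ x _ y _ _ hx _ => hc (A ∪ B) hcard x y hx⟩

end HATFormal
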